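/- arXiv:2206.00650 — 3 statements merged into one kernel-verified Lean document; each statement's English description precedes it below -/
import Mathlib

section
/- For complex numbers t,u,v,w, define E = (t²u² + t²v² + u²w² + v²w² + 4tuvw)/(2(tu+vw)(tv+uw)), F = (t⁴+u⁴+v⁴+w⁴ − 2t²w² − 2u²v²)/((t²+u²−v²−w²)(t²−u²+v²−w²)), C = (t²u² + t²v² + u²w² + v²w² − 4tuvw)/(2(tu−vw)(tv−uw)), and D = ((t²−w²)²(u²−v²)² √((t²+u²+v²+w²)(t²−u²−v²+w²)(t²w²−u²v²)))/((t²+u²−v²−w²)(t²−u²+v²−w²)(t²u²−v²w²)(t²v²−u²w²)). Then C² − D² + E² + F² − 2CEF = 1. -/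
/-!
Put `J z = (z + z⁻¹) / 2`, so that `J (exp a) = cosh a`. All three of `C`, `E`, `F` are values
of `J`:
* `C = J x` with `x = (tu - vw) / (tv - uw)`,
* `E = J y` with `y = (tu + vw) / (tv + uw)`,
* `F = J z` with `z = (t² + u² - v² - w²) / (t² - u² + v² - w²)`.

The addition formulas for `cosh` give
`C² + E² + F² - 2CEF - 1 = (J (x * y) - F) * (J (x / y) - F)`,
and both factors on the right split completely, because `J (p / q) - J (r / s)` is a multiple of
`(ps - qr) * (pr - qs)`. Their product is `D²`.
-/

/-- The Joukowsky map `z ↦ (z + z⁻¹) / 2`, an algebraic substitute for `cosh ∘ log` over a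
field of characteristic other than two. It is meaningful for `z ≠ 0` only; by the
convention `0⁻¹ = 0` it vanishes at `0`. -/
def joukowsky {K : Type*} [Field K] (z : K) : K :=
  (z + z⁻¹) / 2

section Joukowsky

variable {K : Type*} [Field K] {p q r s x y : K}

theorem joukowsky_div (hp : p ≠ 0) (hq : q ≠ 0) :
    joukowsky (p / q) = (p ^ 2 + q ^ 2) / (2 * (p * q)) := by
  rw [joukowsky, inv_div, div_add_div _ _ hq hp, div_div]
  ring

theorem joukowsky_div_sub_joukowsky_div (hp : p ≠ 0) (hq : q ≠ 0) (hr : r ≠ 0) (hs : s ≠ 0) :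
    joukowsky (p / q) - joukowsky (r / s) =
      (p * s - q * r) * (p * r - q * s) / (2 * ((p * q) * (r * s))) := by
  unfold joukowsky
  field_simp
  ring

variable [NeZero (2 : K)]

theorem joukowsky_mul_add_joukowsky_div (x y : K) :
    joukowsky (x * y) + joukowsky (x / y) = 2 * joukowsky x * joukowsky y := by
  have two_ne : (2 : K) ≠ 0 := two_ne_zero
  simp only [joukowsky, div_eq_mul_inv x y, mul_inv, inv_inv]
  field_simp
  ring

theorem joukowsky_mul_mul_joukowsky_div (hx : x ≠ 0) (hy : y ≠ 0) :
    joukowsky (x * y) * joukowsky (x / y) = joukowsky x ^ 2 + joukowsky y ^ 2 - 1 := by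
  have two_ne : (2 : K) ≠ 0 := two_ne_zero
  unfold joukowsky
  field_simp
  ring

theorem joukowsky_mul_sub_mul_joukowsky_div_sub (hx : x ≠ 0) (hy : y ≠ 0) (c : K) :
    (joukowsky (x * y) - c) * (joukowsky (x / y) - c) =
      joukowsky x ^ 2 + joukowsky y ^ 2 + c ^ 2 - 2 * joukowsky x * joukowsky y * c - 1 := by
  linear_combination joukowsky_mul_mul_joukowsky_div hx hy -
    c * joukowsky_mul_add_joukowsky_div x y

end Joukowsky

/-- A preimage of `C` under the Joukowsky map (`x` in the header). -/
def ratioC {K : Type*} [Field K] (t u v w : K) : K :=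
  (t * u - v * w) / (t * v - u * w)

/-- A preimage of `E` under the Joukowsky map (`y` in the header). -/
def ratioE {K : Type*} [Field K] (t u v w : K) : K :=
  (t * u + v * w) / (t * v + u * w)

/-- A preimage of `F` under the Joukowsky map (`z` in the header). -/
def ratioF {K : Type*} [Field K] (t u v w : K) : K :=
  (t ^ 2 + u ^ 2 - v ^ 2 - w ^ 2) / (t ^ 2 - u ^ 2 + v ^ 2 - w ^ 2)

section Parametrization

variable {K : Type*} [Field K] {t u v w : K}

theorem joukowsky_ratioC (hp : t * u - v * w ≠ 0) (hq : t * v - u * w ≠ 0) :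
    joukowsky (ratioC t u v w) =
      (t ^ 2 * u ^ 2 + t ^ 2 * v ^ 2 + u ^ 2 * w ^ 2 + v ^ 2 * w ^ 2 - 4 * t * u * v * w) /
        (2 * (t * u - v * w) * (t * v - u * w)) := by
  rw [ratioC, joukowsky_div hp hq]
  congr 1 <;> ring

theorem joukowsky_ratioE (hp : t * u + v * w ≠ 0) (hq : t * v + u * w ≠ 0) :
    joukowsky (ratioE t u v w) =
      (t ^ 2 * u ^ 2 + t ^ 2 * v ^ 2 + u ^ 2 * w ^ 2 + v ^ 2 * w ^ 2 + 4 * t * u * v * w) /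
        (2 * (t * u + v * w) * (t * v + u * w)) := by
  rw [ratioE, joukowsky_div hp hq]
  congr 1 <;> ring

theorem joukowsky_ratioF [NeZero (2 : K)]
    (hm : t ^ 2 + u ^ 2 - v ^ 2 - w ^ 2 ≠ 0) (hn : t ^ 2 - u ^ 2 + v ^ 2 - w ^ 2 ≠ 0) :
    joukowsky (ratioF t u v w) =
      (t ^ 4 + u ^ 4 + v ^ 4 + w ^ 4 - 2 * t ^ 2 * w ^ 2 - 2 * u ^ 2 * v ^ 2) /
        ((t ^ 2 + u ^ 2 - v ^ 2 - w ^ 2) * (t ^ 2 - u ^ 2 + v ^ 2 - w ^ 2)) := by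
  have sum_sq :
      (t ^ 2 + u ^ 2 - v ^ 2 - w ^ 2) ^ 2 + (t ^ 2 - u ^ 2 + v ^ 2 - w ^ 2) ^ 2 =
        2 * (t ^ 4 + u ^ 4 + v ^ 4 + w ^ 4 - 2 * t ^ 2 * w ^ 2 - 2 * u ^ 2 * v ^ 2) := by
    ring
  rw [ratioF, joukowsky_div hm hn, sum_sq, mul_div_mul_left _ _ two_ne_zero]

theorem joukowsky_ratioC_mul_ratioE_sub_joukowsky_ratioF
    (hm : t ^ 2 + u ^ 2 - v ^ 2 - w ^ 2 ≠ 0) (hn : t ^ 2 - u ^ 2 + v ^ 2 - w ^ 2 ≠ 0)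
    (hk : t ^ 2 * u ^ 2 - v ^ 2 * w ^ 2 ≠ 0) (hl : t ^ 2 * v ^ 2 - u ^ 2 * w ^ 2 ≠ 0) :
    joukowsky (ratioC t u v w * ratioE t u v w) - joukowsky (ratioF t u v w) =
      ((t ^ 2 - w ^ 2) * (u ^ 2 - v ^ 2)) ^ 2 *
          ((t ^ 2 + u ^ 2 + v ^ 2 + w ^ 2) * (t ^ 2 - u ^ 2 - v ^ 2 + w ^ 2)) /
        (2 * (((t ^ 2 * u ^ 2 - v ^ 2 * w ^ 2) * (t ^ 2 * v ^ 2 - u ^ 2 * w ^ 2)) *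
          ((t ^ 2 + u ^ 2 - v ^ 2 - w ^ 2) * (t ^ 2 - u ^ 2 + v ^ 2 - w ^ 2)))) := by
  have ratioC_mul_ratioE : ratioC t u v w * ratioE t u v w =
      (t ^ 2 * u ^ 2 - v ^ 2 * w ^ 2) / (t ^ 2 * v ^ 2 - u ^ 2 * w ^ 2) := by
    rw [ratioC, ratioE, div_mul_div_comm]
    congr 1 <;> ring
  have cross_sub : (t ^ 2 * u ^ 2 - v ^ 2 * w ^ 2) * (t ^ 2 - u ^ 2 + v ^ 2 - w ^ 2) -
      (t ^ 2 * v ^ 2 - u ^ 2 * w ^ 2) * (t ^ 2 + u ^ 2 - v ^ 2 - w ^ 2) =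
      (t ^ 2 - w ^ 2) * (u ^ 2 - v ^ 2) * (t ^ 2 - u ^ 2 - v ^ 2 + w ^ 2) := by
    ring
  have parallel_sub : (t ^ 2 * u ^ 2 - v ^ 2 * w ^ 2) * (t ^ 2 + u ^ 2 - v ^ 2 - w ^ 2) -
      (t ^ 2 * v ^ 2 - u ^ 2 * w ^ 2) * (t ^ 2 - u ^ 2 + v ^ 2 - w ^ 2) =
      (t ^ 2 - w ^ 2) * (u ^ 2 - v ^ 2) * (t ^ 2 + u ^ 2 + v ^ 2 + w ^ 2) := by
    ring
  rw [ratioC_mul_ratioE, ratioF, joukowsky_div_sub_joukowsky_div hk hl hm hn,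
    cross_sub, parallel_sub]
  congr 1
  ring

theorem joukowsky_ratioC_div_ratioE_sub_joukowsky_ratioF [NeZero (2 : K)]
    (hm : t ^ 2 + u ^ 2 - v ^ 2 - w ^ 2 ≠ 0) (hn : t ^ 2 - u ^ 2 + v ^ 2 - w ^ 2 ≠ 0)
    (hp : t * u - v * w ≠ 0) (hq : t * v - u * w ≠ 0)
    (hp' : t * u + v * w ≠ 0) (hq' : t * v + u * w ≠ 0) :
    joukowsky (ratioC t u v w / ratioE t u v w) - joukowsky (ratioF t u v w) =
      2 * ((t ^ 2 - w ^ 2) * (u ^ 2 - v ^ 2)) ^ 2 * (t ^ 2 * w ^ 2 - u ^ 2 * v ^ 2) /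
        (((t ^ 2 * u ^ 2 - v ^ 2 * w ^ 2) * (t ^ 2 * v ^ 2 - u ^ 2 * w ^ 2)) *
          ((t ^ 2 + u ^ 2 - v ^ 2 - w ^ 2) * (t ^ 2 - u ^ 2 + v ^ 2 - w ^ 2))) := by
  have cross_sub :
      (t * u - v * w) * (t * v + u * w) * (t ^ 2 - u ^ 2 + v ^ 2 - w ^ 2) -
        (t * v - u * w) * (t * u + v * w) * (t ^ 2 + u ^ 2 - v ^ 2 - w ^ 2) =
      2 * ((t ^ 2 - w ^ 2) * (u ^ 2 - v ^ 2)) * (t * w - u * v) := by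
    ring
  have parallel_sub :
      (t * u - v * w) * (t * v + u * w) * (t ^ 2 + u ^ 2 - v ^ 2 - w ^ 2) -
        (t * v - u * w) * (t * u + v * w) * (t ^ 2 - u ^ 2 + v ^ 2 - w ^ 2) =
      2 * ((t ^ 2 - w ^ 2) * (u ^ 2 - v ^ 2)) * (t * w + u * v) := by
    ring
  rw [ratioC, ratioE, ratioF, div_div_div_eq,
    joukowsky_div_sub_joukowsky_div (mul_ne_zero hp hq') (mul_ne_zero hq hp') hm hn,
    cross_sub, parallel_sub, mul_assoc 2 _ (t * w - u * v), mul_assoc 2 (_ * (t * w - u * v)),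
    mul_div_mul_left _ _ two_ne_zero]
  congr 1 <;> ring

end Parametrization

theorem stmt3_general {K : Type*} [Field K] [NeZero (2 : K)] {t u v w E F C D s : K}
    (hden : (t ^ 2 + u ^ 2 - v ^ 2 - w ^ 2) * (t ^ 2 - u ^ 2 + v ^ 2 - w ^ 2) *
      (t ^ 2 * u ^ 2 - v ^ 2 * w ^ 2) * (t ^ 2 * v ^ 2 - u ^ 2 * w ^ 2) ≠ 0)
    (hs : s ^ 2 = (t ^ 2 + u ^ 2 + v ^ 2 + w ^ 2) * (t ^ 2 - u ^ 2 - v ^ 2 + w ^ 2) *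
      (t ^ 2 * w ^ 2 - u ^ 2 * v ^ 2))
    (hE : E = (t ^ 2 * u ^ 2 + t ^ 2 * v ^ 2 + u ^ 2 * w ^ 2 + v ^ 2 * w ^ 2 + 4 * t * u * v * w) /
      (2 * (t * u + v * w) * (t * v + u * w)))
    (hF : F = (t ^ 4 + u ^ 4 + v ^ 4 + w ^ 4 - 2 * t ^ 2 * w ^ 2 - 2 * u ^ 2 * v ^ 2) /
      ((t ^ 2 + u ^ 2 - v ^ 2 - w ^ 2) * (t ^ 2 - u ^ 2 + v ^ 2 - w ^ 2)))
    (hC : C = (t ^ 2 * u ^ 2 + t ^ 2 * v ^ 2 + u ^ 2 * w ^ 2 + v ^ 2 * w ^ 2 - 4 * t * u * v * w) /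
      (2 * (t * u - v * w) * (t * v - u * w)))
    (hD : D = ((t ^ 2 - w ^ 2) ^ 2 * (u ^ 2 - v ^ 2) ^ 2 * s) /
      ((t ^ 2 + u ^ 2 - v ^ 2 - w ^ 2) * (t ^ 2 - u ^ 2 + v ^ 2 - w ^ 2) *
        (t ^ 2 * u ^ 2 - v ^ 2 * w ^ 2) * (t ^ 2 * v ^ 2 - u ^ 2 * w ^ 2))) :
    C ^ 2 - D ^ 2 + E ^ 2 + F ^ 2 - 2 * C * E * F = 1 := by
  obtain ⟨⟨⟨hm, hn⟩, hk⟩, hl⟩ := by simpa only [mul_ne_zero_iff] using hden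
  obtain ⟨hp', hp⟩ : t * u + v * w ≠ 0 ∧ t * u - v * w ≠ 0 := by
    rwa [← mul_ne_zero_iff, ← sq_sub_sq, mul_pow, mul_pow]
  obtain ⟨hq', hq⟩ : t * v + u * w ≠ 0 ∧ t * v - u * w ≠ 0 := by
    rwa [← mul_ne_zero_iff, ← sq_sub_sq, mul_pow, mul_pow]
  rw [← joukowsky_ratioE hp' hq'] at hE
  rw [← joukowsky_ratioF hm hn] at hF
  rw [← joukowsky_ratioC hp hq] at hC
  have D_sq : (joukowsky (ratioC t u v w * ratioE t u v w) - F) *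
      (joukowsky (ratioC t u v w / ratioE t u v w) - F) = D ^ 2 := by
    rw [hF, joukowsky_ratioC_mul_ratioE_sub_joukowsky_ratioF hm hn hk hl,
      joukowsky_ratioC_div_ratioE_sub_joukowsky_ratioF hm hn hp hq hp' hq', hD,
      div_pow, mul_pow _ s, hs]
    field_simp
  have ratioC_ne : ratioC t u v w ≠ 0 := div_ne_zero hp hq
  have ratioE_ne : ratioE t u v w ≠ 0 := div_ne_zero hp' hq'
  rw [joukowsky_mul_sub_mul_joukowsky_div_sub ratioC_ne ratioE_ne, ← hC, ← hE] at D_sq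
  linear_combination D_sq

theorem stmt3 (t u v w E F C D s : ℂ)
    (h1 : 2 * (t*u + v*w) * (t*v + u*w) ≠ 0)
    (h2 : (t^2 + u^2 - v^2 - w^2) * (t^2 - u^2 + v^2 - w^2) ≠ 0)
    (h3 : 2 * (t*u - v*w) * (t*v - u*w) ≠ 0)
    (h4 : (t^2 + u^2 - v^2 - w^2) * (t^2 - u^2 + v^2 - w^2) * (t^2*u^2 - v^2*w^2) * (t^2*v^2 - u^2*w^2) ≠ 0)
    (hs : s^2 = (t^2 + u^2 + v^2 + w^2) * (t^2 - u^2 - v^2 + w^2) * (t^2*w^2 - u^2*v^2))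
    (hE : E = (t^2*u^2 + t^2*v^2 + u^2*w^2 + v^2*w^2 + 4*t*u*v*w) / (2 * (t*u + v*w) * (t*v + u*w)))
    (hF : F = (t^4 + u^4 + v^4 + w^4 - 2*t^2*w^2 - 2*u^2*v^2) /
      ((t^2 + u^2 - v^2 - w^2) * (t^2 - u^2 + v^2 - w^2)))
    (hC : C = (t^2*u^2 + t^2*v^2 + u^2*w^2 + v^2*w^2 - 4*t*u*v*w) / (2 * (t*u - v*w) * (t*v - u*w)))
    (hD : D = ((t^2 - w^2)^2 * (u^2 - v^2)^2 * s) /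
      ((t^2 + u^2 - v^2 - w^2) * (t^2 - u^2 + v^2 - w^2) * (t^2*u^2 - v^2*w^2) * (t^2*v^2 - u^2*w^2))) :
    C^2 - D^2 + E^2 + F^2 - 2*C*E*F = 1 :=
  stmt3_general h4 hs hE hF hC hD
end

section
/- Let a,b,c,d be complex numbers and define A₁ = (b⁴+c⁴−a⁴−d⁴)/(a²d²−b²c²), B₁ = (a⁴+c⁴−b⁴−d⁴)/(b²d²−a²c²), C₁ = (a⁴+b⁴−c⁴−d⁴)/(c²d²−a²b²), and D₁ = abcd(a²+d²−b²−c²)(b²+d²−a²−c²)(c²+d²−a²−b²)(a²+b²+c²+d²)/((a²d²−b²c²)(b²d²−a²c²)(c²d²−a²b²)). Suppose a² = t²+u²+v²+w², b² = 2(tw+uv), c² = t²−u²−v²+w², d² = 2(tw−uv) for some complex t,u,v,w making all denominators nonzero. Then A₁² + B₁² + C₁² − D₁² − A₁B₁C₁ = 4. -/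
/-!
Write `p, q, r, s` for `a², b², c², d²`, and `X = ps - qr`, `Y = qs - pr`, `Z = rs - pq` for the
three denominators. The linear factors in the numerator of `D₁` multiply to a polynomial `Π`
symmetric in `p, q, r, s`, and differences of squares give `A₁² - 4 = Π / X²`, `B₁² - 4 = Π / Y²`,
`C₁² - 4 = Π / Z²`. Moreover `A₁B₁ - 2C₁ = Π (pq + rs) / (XYZ)`. Since
`A₁² + B₁² + C₁² - A₁B₁C₁ - 4 = (A₁² - 4) + (B₁² - 4) - (C₁² - 4) - C₁ (A₁B₁ - 2C₁)`,
this expression is `Π / (XYZ)²` times a polynomial, which turns out to be `pqrs Π`; and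
`pqrs Π² / (XYZ)² = D₁²`.
-/

section CommRing

variable {R : Type*} [CommRing R]

/-- The product of the linear forms `± p ± q ± r + s` with an even number of minus signs. It is the
common numerator of `A² - 4`, `B² - 4`, `C² - 4` for Hudson's coefficients `A, B, C`. -/
def evenSignProduct (p q r s : R) : R :=
  (p + s - q - r) * (q + s - p - r) * (r + s - p - q) * (p + q + r + s)

theorem evenSignProduct_swap (p q r s : R) :
    evenSignProduct q p r s = evenSignProduct p q r s := by
  unfold evenSignProduct
  ring

theorem evenSignProduct_rotate (p q r s : R) :
    evenSignProduct r p q s = evenSignProduct p q r s := by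
  unfold evenSignProduct
  ring

theorem evenSignProduct_eq_sq_sub_four_mul_sq (p q r s : R) :
    evenSignProduct p q r s =
      (q ^ 2 + r ^ 2 - p ^ 2 - s ^ 2) ^ 2 - 4 * (p * s - q * r) ^ 2 := by
  have h_add : q ^ 2 + r ^ 2 - p ^ 2 - s ^ 2 + 2 * (p * s - q * r) =
      -((q + s - p - r) * (r + s - p - q)) := by ring
  have h_sub : q ^ 2 + r ^ 2 - p ^ 2 - s ^ 2 - 2 * (p * s - q * r) =
      -((p + s - q - r) * (p + q + r + s)) := by ring
  calc evenSignProduct p q r s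
      = -((q + s - p - r) * (r + s - p - q)) * -((p + s - q - r) * (p + q + r + s)) := by
        unfold evenSignProduct
        ring
    _ = (q ^ 2 + r ^ 2 - p ^ 2 - s ^ 2) ^ 2 - 4 * (p * s - q * r) ^ 2 := by
        rw [← h_add, ← h_sub]
        ring

theorem mul_sub_two_mul_eq_evenSignProduct_mul (p q r s : R) :
    (q ^ 2 + r ^ 2 - p ^ 2 - s ^ 2) * (p ^ 2 + r ^ 2 - q ^ 2 - s ^ 2) * (r * s - p * q) -
        2 * (p ^ 2 + q ^ 2 - r ^ 2 - s ^ 2) * ((p * s - q * r) * (q * s - p * r)) =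
      evenSignProduct p q r s * (p * q + r * s) := by
  unfold evenSignProduct
  ring

theorem mul_evenSignProduct_eq (p q r s : R) :
    p * q * r * s * evenSignProduct p q r s =
      (r * s - p * q) ^ 2 * ((p * s - q * r) ^ 2 + (q * s - p * r) ^ 2) -
        ((p * s - q * r) * (q * s - p * r)) ^ 2 -
        (p ^ 2 + q ^ 2 - r ^ 2 - s ^ 2) * (p * q + r * s) *
          ((p * s - q * r) * (q * s - p * r)) := by
  -- All terms are polynomials in `pq`, `rs`, `p² + q²` and `r² + s²`.
  have h_prod : evenSignProduct p q r s =
      ((p ^ 2 + q ^ 2) - (r ^ 2 + s ^ 2)) ^ 2 - 4 * (r * s - p * q) ^ 2 := by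
    rw [← evenSignProduct_rotate, evenSignProduct_eq_sq_sub_four_mul_sq]
    ring
  have h_add : (p * s - q * r) ^ 2 + (q * s - p * r) ^ 2 =
      (p ^ 2 + q ^ 2) * (r ^ 2 + s ^ 2) - 4 * (p * q) * (r * s) := by ring
  have h_mul : (p * s - q * r) * (q * s - p * r) =
      p * q * (r ^ 2 + s ^ 2) - r * s * (p ^ 2 + q ^ 2) := by ring
  rw [h_prod, h_add, h_mul]
  ring

end CommRing

section Field

variable {K : Type*} [Field K] {p q r s : K}

/-- Hudson's coefficient `A` of a Kummer quartic, as a function of the squares `p, q, r, s` of the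
parameters `a, b, c, d`. The coefficients `B` and `C` are obtained from it by permuting the
arguments, as `hudsonCoeff q p r s` and `hudsonCoeff r p q s`. -/
def hudsonCoeff (p q r s : K) : K :=
  (q ^ 2 + r ^ 2 - p ^ 2 - s ^ 2) / (p * s - q * r)

theorem hudsonCoeff_sq_sub_four (h : p * s - q * r ≠ 0) :
    hudsonCoeff p q r s ^ 2 - 4 = evenSignProduct p q r s / (p * s - q * r) ^ 2 := by
  rw [hudsonCoeff, evenSignProduct_eq_sq_sub_four_mul_sq, div_pow, sub_div,
    mul_div_cancel_right₀ _ (pow_ne_zero 2 h)]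

theorem hudsonCoeff_mul_sub_two_mul (hX : p * s - q * r ≠ 0) (hY : q * s - p * r ≠ 0)
    (hZ : r * s - p * q ≠ 0) :
    hudsonCoeff p q r s * hudsonCoeff q p r s - 2 * hudsonCoeff r p q s =
      evenSignProduct p q r s * (p * q + r * s) /
        ((p * s - q * r) * (q * s - p * r) * (r * s - p * q)) := by
  rw [← mul_sub_two_mul_eq_evenSignProduct_mul]
  unfold hudsonCoeff
  -- `field_simp` reorders products inside the denominators and then fails to match `hX, hY, hZ`.
  generalize p * s - q * r = X at hX ⊢
  generalize q * s - p * r = Y at hY ⊢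
  generalize r * s - p * q = Z at hZ ⊢
  field_simp

theorem hudsonCoeff_cubic (hX : p * s - q * r ≠ 0) (hY : q * s - p * r ≠ 0)
    (hZ : r * s - p * q ≠ 0) :
    hudsonCoeff p q r s ^ 2 + hudsonCoeff q p r s ^ 2 + hudsonCoeff r p q s ^ 2 -
        hudsonCoeff p q r s * hudsonCoeff q p r s * hudsonCoeff r p q s - 4 =
      p * q * r * s * evenSignProduct p q r s ^ 2 /
        ((p * s - q * r) * (q * s - p * r) * (r * s - p * q)) ^ 2 := by
  have hA := hudsonCoeff_sq_sub_four hX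
  have hB : hudsonCoeff q p r s ^ 2 - 4 = evenSignProduct p q r s / (q * s - p * r) ^ 2 := by
    rw [hudsonCoeff_sq_sub_four hY, evenSignProduct_swap]
  have hC : hudsonCoeff r p q s ^ 2 - 4 = evenSignProduct p q r s / (r * s - p * q) ^ 2 := by
    rw [hudsonCoeff_sq_sub_four hZ, evenSignProduct_rotate]
  calc _ = (hudsonCoeff p q r s ^ 2 - 4) + (hudsonCoeff q p r s ^ 2 - 4) -
          (hudsonCoeff r p q s ^ 2 - 4) - hudsonCoeff r p q s *
            (hudsonCoeff p q r s * hudsonCoeff q p r s - 2 * hudsonCoeff r p q s) := by ring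
    _ = evenSignProduct p q r s / (p * s - q * r) ^ 2 +
          evenSignProduct p q r s / (q * s - p * r) ^ 2 -
          evenSignProduct p q r s / (r * s - p * q) ^ 2 -
          (p ^ 2 + q ^ 2 - r ^ 2 - s ^ 2) / (r * s - p * q) *
            (evenSignProduct p q r s * (p * q + r * s) /
              ((p * s - q * r) * (q * s - p * r) * (r * s - p * q))) := by
        rw [hA, hB, hC, hudsonCoeff_mul_sub_two_mul hX hY hZ, hudsonCoeff]
    _ = evenSignProduct p q r s * (p * q * r * s * evenSignProduct p q r s) /
          ((p * s - q * r) * (q * s - p * r) * (r * s - p * q)) ^ 2 := by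
        rw [mul_evenSignProduct_eq]
        generalize p * s - q * r = X at hX ⊢
        generalize q * s - p * r = Y at hY ⊢
        generalize r * s - p * q = Z at hZ ⊢
        field_simp
        ring
    _ = _ := by ring

theorem stmt4_general (a b c d A₁ B₁ C₁ D₁ : K)
    (h1 : a ^ 2 * d ^ 2 - b ^ 2 * c ^ 2 ≠ 0)
    (h2 : b ^ 2 * d ^ 2 - a ^ 2 * c ^ 2 ≠ 0)
    (h3 : c ^ 2 * d ^ 2 - a ^ 2 * b ^ 2 ≠ 0)
    (hA : A₁ = (b ^ 4 + c ^ 4 - a ^ 4 - d ^ 4) / (a ^ 2 * d ^ 2 - b ^ 2 * c ^ 2))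
    (hB : B₁ = (a ^ 4 + c ^ 4 - b ^ 4 - d ^ 4) / (b ^ 2 * d ^ 2 - a ^ 2 * c ^ 2))
    (hC : C₁ = (a ^ 4 + b ^ 4 - c ^ 4 - d ^ 4) / (c ^ 2 * d ^ 2 - a ^ 2 * b ^ 2))
    (hD : D₁ = a * b * c * d * (a ^ 2 + d ^ 2 - b ^ 2 - c ^ 2) * (b ^ 2 + d ^ 2 - a ^ 2 - c ^ 2) *
      (c ^ 2 + d ^ 2 - a ^ 2 - b ^ 2) * (a ^ 2 + b ^ 2 + c ^ 2 + d ^ 2) /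
      ((a ^ 2 * d ^ 2 - b ^ 2 * c ^ 2) * (b ^ 2 * d ^ 2 - a ^ 2 * c ^ 2) *
        (c ^ 2 * d ^ 2 - a ^ 2 * b ^ 2))) :
    A₁ ^ 2 + B₁ ^ 2 + C₁ ^ 2 - D₁ ^ 2 - A₁ * B₁ * C₁ = 4 := by
  have hA' : A₁ = hudsonCoeff (a ^ 2) (b ^ 2) (c ^ 2) (d ^ 2) := by
    rw [hA, hudsonCoeff]
    ring
  have hB' : B₁ = hudsonCoeff (b ^ 2) (a ^ 2) (c ^ 2) (d ^ 2) := by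
    rw [hB, hudsonCoeff]
    ring
  have hC' : C₁ = hudsonCoeff (c ^ 2) (a ^ 2) (b ^ 2) (d ^ 2) := by
    rw [hC, hudsonCoeff]
    ring
  have hD' : D₁ ^ 2 = a ^ 2 * b ^ 2 * c ^ 2 * d ^ 2 *
      evenSignProduct (a ^ 2) (b ^ 2) (c ^ 2) (d ^ 2) ^ 2 /
        ((a ^ 2 * d ^ 2 - b ^ 2 * c ^ 2) * (b ^ 2 * d ^ 2 - a ^ 2 * c ^ 2) *
          (c ^ 2 * d ^ 2 - a ^ 2 * b ^ 2)) ^ 2 := by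
    rw [hD, evenSignProduct, div_pow]
    congr 1
    ring
  rw [hD', hA', hB', hC']
  linear_combination hudsonCoeff_cubic h1 h2 h3

end Field

theorem stmt4 (a b c d t u v w A₁ B₁ C₁ D₁ : ℂ)
    (ha : a^2 = t^2 + u^2 + v^2 + w^2)
    (hb : b^2 = 2 * (t*w + u*v))
    (hc : c^2 = t^2 - u^2 - v^2 + w^2)
    (hd : d^2 = 2 * (t*w - u*v))
    (h1 : a^2*d^2 - b^2*c^2 ≠ 0)
    (h2 : b^2*d^2 - a^2*c^2 ≠ 0)
    (h3 : c^2*d^2 - a^2*b^2 ≠ 0)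
    (hA : A₁ = (b^4 + c^4 - a^4 - d^4) / (a^2*d^2 - b^2*c^2))
    (hB : B₁ = (a^4 + c^4 - b^4 - d^4) / (b^2*d^2 - a^2*c^2))
    (hC : C₁ = (a^4 + b^4 - c^4 - d^4) / (c^2*d^2 - a^2*b^2))
    (hD : D₁ = a*b*c*d * (a^2 + d^2 - b^2 - c^2) * (b^2 + d^2 - a^2 - c^2) *
      (c^2 + d^2 - a^2 - b^2) * (a^2 + b^2 + c^2 + d^2) /
      ((a^2*d^2 - b^2*c^2) * (b^2*d^2 - a^2*c^2) * (c^2*d^2 - a^2*b^2))) :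
    A₁^2 + B₁^2 + C₁^2 - D₁^2 - A₁*B₁*C₁ = 4 :=
  stmt4_general a b c d A₁ B₁ C₁ D₁ h1 h2 h3 hA hB hC hD
end

section
/- Suppose C² − D² + E² + F² − 2CEF = 1 with E² ≠ 1 and C² ≠ 1. Define b = (CF−E)/√((C²−1)(E²−1)), b₁ = D/√((C²−1)(E²−1)), c₁ = (CE−F)/√((C²−1)(E²−1)), a = (C²−1)/√((C²−1)(E²−1)), c = CD/√((C²−1)(E²−1)), and G(p,q) = F(1+p²q²) − C(p²+q²) + 2Dpq, Δ(x)² = 1 − 2Ex² + x⁴. Then for all complex p, q: (b(1+p²q²) − a(p²+q²) + 2cpq)²/4 − (G(p,q)² − Δ(p)²Δ(q)²)/(4(E²−1)) = (b₁(1+p²q²)/2 − c₁pq)². -/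
/-!
Put `M = E (1 + p²q²) - (p² + q²)`. Then `Δ(p)² Δ(q)² = M² - (E² - 1) (1 - p²q²)²`, and after
clearing the denominator the first squared term is `C G - M`. Since
`(C G - M)² - (C² - 1) (G² - M²) = (G - C M)²`, and `p² + q²` cancels in `G - C M`, the claim
reduces to an identity between forms in `1 + p²q²` and `pq` alone. That identity is the
constraint, rewritten as `(F - C E)² - D² = (C² - 1) (E² - 1)`.
-/

section CommRing

variable {R : Type*} [CommRing R]

/-- The symmetric biquadratic form `a (1 + p²q²) - b (p² + q²) + 2c pq`. With coefficients
`F, C, D` it is the function `G(p, q)`. -/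
def symmBiquadratic (a b c p q : R) : R :=
  a * (1 + p ^ 2 * q ^ 2) - b * (p ^ 2 + q ^ 2) + 2 * c * p * q

/-- The quartic `Δ(x)²`, taken as a polynomial so that no branch of `Δ` has to be chosen. -/
def deltaSq (E x : R) : R :=
  1 - 2 * E * x ^ 2 + x ^ 4

theorem deltaSq_mul_deltaSq (E p q : R) :
    deltaSq E p * deltaSq E q =
      symmBiquadratic E 1 0 p q ^ 2 - (E ^ 2 - 1) * (1 - p ^ 2 * q ^ 2) ^ 2 := by
  simp only [deltaSq, symmBiquadratic]
  ring

theorem symmBiquadratic_sq_sub_swap_sq (a c p q : R) :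
    symmBiquadratic a 0 c p q ^ 2 - symmBiquadratic c 0 a p q ^ 2 =
      (a ^ 2 - c ^ 2) * (1 - p ^ 2 * q ^ 2) ^ 2 := by
  simp only [symmBiquadratic]
  ring

theorem mul_sub_sq_sub_mul_sq_sub_sq (c x y : R) :
    (c * x - y) ^ 2 - (c ^ 2 - 1) * (x ^ 2 - y ^ 2) = (x - c * y) ^ 2 := by
  ring

theorem symmBiquadratic_sq_sub_mul_deltaSq {C D E F : R}
    (hconstraint : C ^ 2 - D ^ 2 + E ^ 2 + F ^ 2 - 2 * C * E * F = 1) (p q : R) :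
    symmBiquadratic (C * F - E) (C ^ 2 - 1) (C * D) p q ^ 2
      - (C ^ 2 - 1) * (symmBiquadratic F C D p q ^ 2 - deltaSq E p * deltaSq E q) =
      symmBiquadratic D 0 (F - C * E) p q ^ 2 := by
  set G := symmBiquadratic F C D p q with hG
  set M := symmBiquadratic E 1 0 p q with hM
  have hCG : symmBiquadratic (C * F - E) (C ^ 2 - 1) (C * D) p q = C * G - M := by
    simp only [hG, hM, symmBiquadratic]
    ring
  have hCM : G - C * M = symmBiquadratic (F - C * E) 0 D p q := by
    simp only [hG, hM, symmBiquadratic]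
    ring
  have hdisc : (F - C * E) ^ 2 - D ^ 2 = (C ^ 2 - 1) * (E ^ 2 - 1) := by
    linear_combination hconstraint
  calc
    _ = (C * G - M) ^ 2 - (C ^ 2 - 1) * (G ^ 2 - M ^ 2)
          - (C ^ 2 - 1) * (E ^ 2 - 1) * (1 - p ^ 2 * q ^ 2) ^ 2 := by
      rw [hCG, deltaSq_mul_deltaSq, ← hM]
      ring
    _ = symmBiquadratic (F - C * E) 0 D p q ^ 2
          - ((F - C * E) ^ 2 - D ^ 2) * (1 - p ^ 2 * q ^ 2) ^ 2 := by
      rw [mul_sub_sq_sub_mul_sq_sub_sq, hCM, hdisc]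
    _ = symmBiquadratic D 0 (F - C * E) p q ^ 2 := by
      rw [← symmBiquadratic_sq_sub_swap_sq, sub_sub_cancel]

end CommRing

section Field

variable {K : Type*} [Field K]

theorem symmBiquadratic_div (a b c r p q : K) :
    symmBiquadratic (a / r) (b / r) (c / r) p q = symmBiquadratic a b c p q / r := by
  simp only [symmBiquadratic]
  ring

theorem stmt7_general [NeZero (2 : K)] {C D E F r : K}
    (hconstraint : C ^ 2 - D ^ 2 + E ^ 2 + F ^ 2 - 2 * C * E * F = 1)
    (hr : r ^ 2 = (C ^ 2 - 1) * (E ^ 2 - 1)) (hr0 : r ≠ 0) (p q : K) :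
    symmBiquadratic ((C * F - E) / r) ((C ^ 2 - 1) / r) (C * D / r) p q ^ 2 / 4
      - (symmBiquadratic F C D p q ^ 2 - deltaSq E p * deltaSq E q) / (4 * (E ^ 2 - 1)) =
      (D / r * (1 + p ^ 2 * q ^ 2) / 2 - (C * E - F) / r * p * q) ^ 2 := by
  set N := symmBiquadratic F C D p q ^ 2 - deltaSq E p * deltaSq E q with hN
  have hC : C ^ 2 - 1 ≠ 0 := left_ne_zero_of_mul (hr ▸ pow_ne_zero 2 hr0)
  have hdenom : N / (4 * (E ^ 2 - 1)) = (C ^ 2 - 1) * N / (4 * r ^ 2) := by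
    rw [hr, mul_left_comm, mul_div_mul_left _ _ hC]
  have hroot : D / r * (1 + p ^ 2 * q ^ 2) / 2 - (C * E - F) / r * p * q =
      symmBiquadratic D 0 (F - C * E) p q / (2 * r) := by
    simp only [symmBiquadratic]
    field_simp
    ring
  rw [hdenom, hroot, symmBiquadratic_div, div_pow _ (2 * r),
    ← symmBiquadratic_sq_sub_mul_deltaSq hconstraint, ← hN]
  ring

end Field

theorem stmt7 (C D E F r : ℂ)
    (hconstraint : C^2 - D^2 + E^2 + F^2 - 2*C*E*F = 1)
    (hE : E^2 ≠ 1) (hC : C^2 ≠ 1)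
    (hr : r^2 = (C^2 - 1) * (E^2 - 1)) (hr0 : r ≠ 0) :
    ∀ p q : ℂ,
      (((C*F - E)/r) * (1 + p^2*q^2) - ((C^2 - 1)/r) * (p^2 + q^2) + 2 * ((C*D)/r) * p * q)^2 / 4
      - ((F*(1 + p^2*q^2) - C*(p^2 + q^2) + 2*D*p*q)^2
          - (1 - 2*E*p^2 + p^4) * (1 - 2*E*q^2 + q^4)) / (4 * (E^2 - 1))
      = ((D/r) * (1 + p^2*q^2) / 2 - ((C*E - F)/r) * p * q)^2 :=
  stmt7_general hconstraint hr hr0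
end
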